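/- Let c > 0, let 𝒜⁰ : ℝ × ℝ³ → ℝ and 𝓐 : ℝ × ℝ³ → ℝ³ be C² with 𝓐(t, ·) supported in a fixed compact set 𝒦 ⊂ ℝ³ for all t in an open interval I, and suppose the homentropic equation of motion ℰ + (v/c)×ℬ = 0 holds everywhere (the case dθ = 0), where ℰ = −∇𝒜⁰ − c⁻¹∂_t𝓐, ℬ = ∇×𝓐, and v : ℝ × ℝ³ → ℝ³ is any velocity field. Then the semi-relativistic helicity C(t) = ∫_{ℝ³} (𝓐·ℬ)(t, x) d³x is constant on I, regardless of the relativistic factor γ. -/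

import Mathlib

open MeasureTheory

noncomputable section

abbrev V3 := Fin 3 → ℝ

/-- Euclidean dot product on ℝ³. -/
def dot3 (a b : V3) : ℝ := ∑ i, a i * b i

/-- Cross product on ℝ³. -/
def cross3 (a b : V3) : V3 := fun i => a (i + 1) * b (i + 2) - a (i + 2) * b (i + 1)

/-- Time derivative ∂_t of a scalar function on ℝ × ℝ³. -/
def pdt (f : ℝ × V3 → ℝ) (p : ℝ × V3) : ℝ := fderiv ℝ f p ((1 : ℝ), (0 : V3))

/-- Spatial derivative ∂_j of a scalar function on ℝ × ℝ³. -/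
def pdx (j : Fin 3) (f : ℝ × V3 → ℝ) (p : ℝ × V3) : ℝ :=
  fderiv ℝ f p ((0 : ℝ), Pi.single j 1)

/-- Spatial gradient. -/
def grad3 (f : ℝ × V3 → ℝ) (p : ℝ × V3) : V3 := fun j => pdx j f p

/-- Spatial curl. -/
def curl3 (A : ℝ × V3 → V3) (p : ℝ × V3) : V3 := fun i =>
  pdx (i + 1) (fun q => A q (i + 2)) p - pdx (i + 2) (fun q => A q (i + 1)) p

/-- Spatial divergence. -/
def div3 (A : ℝ × V3 → V3) (p : ℝ × V3) : ℝ := ∑ j, pdx j (fun q => A q j) p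

/-- ℰ = −∇𝒜⁰ − c⁻¹ ∂_t 𝓐. -/
def Efield (c : ℝ) (A0 : ℝ × V3 → ℝ) (A : ℝ × V3 → V3) (p : ℝ × V3) : V3 := fun i =>
  -grad3 A0 p i - c⁻¹ * fderiv ℝ (fun q => A q i) p ((1 : ℝ), (0 : V3))

/-- ℬ = ∇×𝓐. -/
def Bfield (A : ℝ × V3 → V3) (p : ℝ × V3) : V3 := curl3 A p

/-- The semi-relativistic helicity C(t) = ∫_{ℝ³} 𝓐·ℬ d³x. -/
def semiHelicity (A : ℝ × V3 → V3) (t : ℝ) : ℝ :=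
  ∫ x : V3, dot3 (A (t, x)) (Bfield A (t, x))

/-!
The equation of motion forces `ℰ ⬝ ℬ = 0`, whereas for arbitrary potentials the helicity density
satisfies the local balance law `∂ₜ(𝓐 ⬝ ℬ) + ∇ ⬝ (2c𝒜⁰ℬ + 𝓐 × ∂ₜ𝓐) = -2c ℰ ⬝ ℬ`. The flux vanishes
wherever `𝓐` vanishes locally, so its divergence integrates to zero and `C'(t) = -2c ∫ ℰ ⬝ ℬ`.
-/

section Calculus

open Topology

theorem hasDerivAt_integral_of_continuous_of_isCompact {𝕜 X F : Type*} [RCLike 𝕜]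
    [TopologicalSpace X] [R1Space X] [MeasurableSpace X] [OpensMeasurableSpace X]
    {μ : Measure X} [IsFiniteMeasureOnCompacts μ]
    [NormedAddCommGroup F] [NormedSpace ℝ F] [NormedSpace 𝕜 F]
    {f f' : 𝕜 → X → F} {s : Set 𝕜} {K : Set X} {t : 𝕜} (hs : s ∈ 𝓝 t) (hK : IsCompact K)
    (hf : ∀ r ∈ s, Continuous (f r)) (hf' : Continuous f'.uncurry)
    (hderiv : ∀ r ∈ s, ∀ x, HasDerivAt (f · x) (f' r x) r)
    (hfK : ∀ r ∈ s, ∀ x ∉ K, f r x = 0) :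
    Integrable (f' t) μ ∧ HasDerivAt (fun r ↦ ∫ x, f r x ∂μ) (∫ x, f' t x ∂μ) t := by
  obtain ⟨J, hJ, hJs, hJc⟩ := local_compact_nhds (interior_mem_nhds.mpr hs)
  have hJs' : J ⊆ s := hJs.trans interior_subset
  have hf'K : ∀ r ∈ J, ∀ x ∉ K, f' r x = 0 := fun r hr x hx ↦ by
    have hzero : (f · x) =ᶠ[𝓝 r] fun _ ↦ 0 :=
      Filter.mem_of_superset (mem_interior_iff_mem_nhds.mp (hJs hr)) fun q hq ↦ hfK q hq x hx
    exact (hderiv r (hJs' hr) x).unique ((hasDerivAt_const r 0).congr_of_eventuallyEq hzero)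
  have integrable_of_zero {g : X → F} (hg : Continuous g) (hgK : ∀ x ∉ K, g x = 0) :
      Integrable g μ :=
    hg.integrable_of_hasCompactSupport (.intro hK fun {x} ↦ hgK x)
  obtain ⟨M, hM⟩ := (hJc.prod hK.closure).exists_bound_of_continuousOn hf'.continuousOn
  have hbound : ∀ x, ∀ r ∈ J, ‖f' r x‖ ≤ (closure K).indicator (fun _ ↦ M) x := by
    intro x r hr
    by_cases hx : x ∈ closure K
    · simpa [hx] using hM (r, x) ⟨hr, hx⟩
    · simp [hx, hf'K r hr x (fun h ↦ hx (subset_closure h))]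
  have ht : t ∈ J := mem_of_mem_nhds hJ
  have hf_int : ∀ r ∈ J, Integrable (f r) μ := fun r hr ↦
    integrable_of_zero (hf r (hJs' hr)) (hfK r (hJs' hr))
  have hf'_int : Integrable (f' t) μ :=
    integrable_of_zero (hf'.comp (Continuous.prodMk_right t)) (hf'K t ht)
  have hM_int : Integrable ((closure K).indicator fun _ ↦ M) μ :=
    (integrable_indicator_iff isClosed_closure.measurableSet).mpr
      (integrableOn_const hK.closure.measure_lt_top.ne)
  exact hasDerivAt_integral_of_dominated_loc_of_deriv_le hJ
    (Filter.mem_of_superset hJ fun r hr ↦ (hf_int r hr).aestronglyMeasurable)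
    (hf_int t ht) hf'_int.aestronglyMeasurable (.of_forall hbound) hM_int
    (.of_forall fun x r hr ↦ hderiv r (hJs' hr) x)

variable {E F : Type*} [NormedAddCommGroup E] [NormedSpace ℝ E]
  [NormedAddCommGroup F] [NormedSpace ℝ F]

theorem integrable_fderiv_apply [MeasurableSpace E] [OpensMeasurableSpace E]
    {μ : Measure E} [IsFiniteMeasureOnCompacts μ] {g : E → F} (hg : ContDiff ℝ 1 g)
    (hc : HasCompactSupport g) (v : E) : Integrable (fun x ↦ fderiv ℝ g x v) μ :=
  ((hg.continuous_fderiv one_ne_zero).clm_apply continuous_const).integrable_of_hasCompactSupport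
    (hc.fderiv_apply ℝ v)

theorem integral_fderiv_apply_eq_zero [FiniteDimensional ℝ E] [MeasurableSpace E] [BorelSpace E]
    {μ : Measure E} [μ.IsAddHaarMeasure] {g : E → F} (hg : ContDiff ℝ 1 g)
    (hc : HasCompactSupport g) (v : E) : ∫ x, fderiv ℝ g x v ∂μ = 0 := by
  simpa using integral_smul_fderiv_eq_neg_fderiv_smul_of_integrable (μ := μ) (v := v)
    (f := fun _ ↦ (1 : ℝ)) (g := g) (by simp) (by simpa using integrable_fderiv_apply hg hc v)
    (by simpa using hg.continuous.integrable_of_hasCompactSupport hc)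
    (by simp) fun x _ ↦ hg.differentiable one_ne_zero x

theorem fderiv_fderiv_apply_comm {f : E → F} {p : E} (hf : ContDiffAt ℝ 2 f p) (u w : E) :
    fderiv ℝ (fun q ↦ fderiv ℝ f q w) p u = fderiv ℝ (fun q ↦ fderiv ℝ f q u) p w := by
  have hf' : DifferentiableAt ℝ (fderiv ℝ f) p :=
    (hf.fderiv_right (m := 1) one_add_one_eq_two.le).differentiableAt one_ne_zero
  have hsnd (u w : E) : fderiv ℝ (fun q ↦ fderiv ℝ f q w) p u = fderiv ℝ (fderiv ℝ f) p u w := by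
    simp [fderiv_clm_apply hf' (differentiableAt_const w)]
  rw [hsnd, hsnd, (hf.isSymmSndFDerivAt (by simp)).eq]

end Calculus

section VectorAlgebra

theorem dot3_comm (a b : V3) : dot3 a b = dot3 b a := by
  simp only [dot3, mul_comm]

theorem dot3_cross3_self (u b : V3) : dot3 (cross3 u b) b = 0 := by
  simp [dot3, cross3, Fin.sum_univ_three]
  ring

theorem dot3_eq_zero_of_add_cross3_div_eq_zero {e u b : V3} {k : ℝ}
    (h : ∀ i, e i + cross3 u b i / k = 0) : dot3 e b = 0 := by
  have he : ∀ i, e i = -k⁻¹ * cross3 u b i := fun i ↦ by linear_combination h i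
  calc dot3 e b = -k⁻¹ * dot3 (cross3 u b) b := by simp only [dot3, he, Finset.mul_sum, mul_assoc]
    _ = 0 := by rw [dot3_cross3_self, mul_zero]

end VectorAlgebra

/-- The time derivative `∂ₜF` of a vector field on `ℝ × ℝ³`, taken componentwise like the other
operators here, so that it agrees definitionally with the `∂ₜ𝓐` term of `Efield`. -/
def pdt3 (F : ℝ × V3 → V3) (p : ℝ × V3) : V3 := fun i ↦ pdt (fun q ↦ F q i) p

section VectorCalculus

open Topology

variable {f : ℝ × V3 → ℝ} {F G : ℝ × V3 → V3} {p : ℝ × V3} {m n : WithTop ℕ∞}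

theorem contDiffAt_pdt (hf : ContDiffAt ℝ n f p) (hmn : m + 1 ≤ n) : ContDiffAt ℝ m (pdt f) p :=
  (hf.fderiv_right hmn).clm_apply contDiffAt_const

theorem contDiffAt_pdx (hf : ContDiffAt ℝ n f p) (hmn : m + 1 ≤ n) (j : Fin 3) :
    ContDiffAt ℝ m (pdx j f) p :=
  (hf.fderiv_right hmn).clm_apply contDiffAt_const

theorem contDiffAt_pdt3 (hF : ContDiffAt ℝ n F p) (hmn : m + 1 ≤ n) :
    ContDiffAt ℝ m (pdt3 F) p :=
  contDiffAt_pi.mpr fun i ↦ contDiffAt_pdt (contDiffAt_pi.mp hF i) hmn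

theorem contDiffAt_curl3 (hF : ContDiffAt ℝ n F p) (hmn : m + 1 ≤ n) :
    ContDiffAt ℝ m (curl3 F) p :=
  contDiffAt_pi.mpr fun i ↦ (contDiffAt_pdx (contDiffAt_pi.mp hF (i + 2)) hmn (i + 1)).sub
    (contDiffAt_pdx (contDiffAt_pi.mp hF (i + 1)) hmn (i + 2))

theorem contDiffAt_dot3 (hF : ContDiffAt ℝ n F p) (hG : ContDiffAt ℝ n G p) :
    ContDiffAt ℝ n (fun q ↦ dot3 (F q) (G q)) p :=
  .sum fun i _ ↦ (contDiffAt_pi.mp hF i).mul (contDiffAt_pi.mp hG i)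

theorem contDiffAt_cross3 (hF : ContDiffAt ℝ n F p) (hG : ContDiffAt ℝ n G p) :
    ContDiffAt ℝ n (fun q ↦ cross3 (F q) (G q)) p :=
  have hFi := contDiffAt_pi.mp hF
  have hGi := contDiffAt_pi.mp hG
  contDiffAt_pi.mpr fun _ ↦ ((hFi _).mul (hGi _)).sub ((hFi _).mul (hGi _))

theorem pdx_comm (hf : ContDiffAt ℝ 2 f p) (i j : Fin 3) :
    pdx i (pdx j f) p = pdx j (pdx i f) p :=
  fderiv_fderiv_apply_comm hf _ _

theorem pdt_pdx_comm (hf : ContDiffAt ℝ 2 f p) (j : Fin 3) :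
    pdt (pdx j f) p = pdx j (pdt f) p :=
  fderiv_fderiv_apply_comm hf _ _

theorem pdt_dot3 (hF : DifferentiableAt ℝ F p) (hG : DifferentiableAt ℝ G p) :
    pdt (fun q ↦ dot3 (F q) (G q)) p = dot3 (pdt3 F p) (G p) + dot3 (F p) (pdt3 G p) := by
  have hFi := differentiableAt_pi.mp hF
  have hGi := differentiableAt_pi.mp hG
  simp (disch := fun_prop) only [pdt, dot3, pdt3, Fin.sum_univ_three, fderiv_fun_add,
    fderiv_fun_mul, add_apply, smul_apply, smul_eq_mul]
  ring

theorem div3_add (hF : DifferentiableAt ℝ F p) (hG : DifferentiableAt ℝ G p) :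
    div3 (fun q ↦ F q + G q) p = div3 F p + div3 G p := by
  have hFi := differentiableAt_pi.mp hF
  have hGi := differentiableAt_pi.mp hG
  simp only [div3, pdx, Pi.add_apply, fderiv_fun_add (hFi _) (hGi _),
    add_apply, Finset.sum_add_distrib]

theorem div3_smul (hf : DifferentiableAt ℝ f p) (hF : DifferentiableAt ℝ F p) :
    div3 (fun q ↦ f q • F q) p = dot3 (grad3 f p) (F p) + f p * div3 F p := by
  have hFi := differentiableAt_pi.mp hF
  simp only [div3, pdx, dot3, grad3, Pi.smul_apply, smul_eq_mul, fderiv_fun_mul hf (hFi _),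
    add_apply, smul_apply, Finset.sum_add_distrib,
    Finset.mul_sum]
  simp only [mul_comm, add_comm]

theorem div3_cross3 (hF : DifferentiableAt ℝ F p) (hG : DifferentiableAt ℝ G p) :
    div3 (fun q ↦ cross3 (F q) (G q)) p = dot3 (curl3 F p) (G p) - dot3 (F p) (curl3 G p) := by
  have hFi := differentiableAt_pi.mp hF
  have hGi := differentiableAt_pi.mp hG
  simp (disch := fun_prop) only [div3, cross3, dot3, curl3, pdx, Fin.sum_univ_three,
    fderiv_fun_sub, fderiv_fun_mul, add_apply, sub_apply,
    smul_apply, smul_eq_mul, Fin.isValue, Fin.reduceAdd]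
  ring

theorem div3_curl3 (hF : ContDiffAt ℝ 2 F p) : div3 (curl3 F) p = 0 := by
  have hFi := contDiffAt_pi.mp hF
  have hpdx (i j : Fin 3) : DifferentiableAt ℝ (pdx j fun q ↦ F q i) p :=
    (contDiffAt_pdx (hFi i) one_add_one_eq_two.le j).differentiableAt one_ne_zero
  have hterm (j : Fin 3) : pdx j (fun q ↦ curl3 F q j) p =
      pdx j (pdx (j + 1) fun q ↦ F q (j + 2)) p - pdx j (pdx (j + 2) fun q ↦ F q (j + 1)) p :=
    congr($(fderiv_fun_sub (hpdx (j + 2) (j + 1)) (hpdx (j + 1) (j + 2))) _)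
  simp only [div3, hterm, Fin.sum_univ_three, Fin.isValue, Fin.reduceAdd]
  rw [pdx_comm (hFi 0) 2 1, pdx_comm (hFi 1) 2 0, pdx_comm (hFi 2) 1 0]
  ring

theorem pdt3_curl3 (hF : ContDiffAt ℝ 2 F p) : pdt3 (curl3 F) p = curl3 (pdt3 F) p := by
  have hFi := contDiffAt_pi.mp hF
  have hpdx (i j : Fin 3) : DifferentiableAt ℝ (pdx j fun q ↦ F q i) p :=
    (contDiffAt_pdx (hFi i) one_add_one_eq_two.le j).differentiableAt one_ne_zero
  ext i
  calc pdt3 (curl3 F) p i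
    _ = pdt (pdx (i + 1) fun q ↦ F q (i + 2)) p - pdt (pdx (i + 2) fun q ↦ F q (i + 1)) p :=
      congr($(fderiv_fun_sub (hpdx (i + 2) (i + 1)) (hpdx (i + 1) (i + 2))) _)
    _ = curl3 (pdt3 F) p i := congr($(pdt_pdx_comm (hFi _) _) - $(pdt_pdx_comm (hFi _) _))

theorem curl3_eq_zero_of_eventuallyEq_zero (hF : F =ᶠ[𝓝 p] 0) : curl3 F p = 0 := by
  have hpdx (i j : Fin 3) : pdx j (fun q ↦ F q i) p = 0 := by
    have hFi : (fun q ↦ F q i) =ᶠ[𝓝 p] fun _ ↦ 0 := hF.mono fun q hq ↦ congrFun hq i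
    simp [pdx, hFi.fderiv_eq]
  ext i
  simp [curl3, hpdx]

theorem pdx_eq_fderiv_slice {t : ℝ} {x : V3} (hf : DifferentiableAt ℝ f (t, x)) (j : Fin 3) :
    pdx j f (t, x) = fderiv ℝ (fun y ↦ f (t, y)) x (Pi.single j 1) := by
  have hslice : HasFDerivAt (fun y ↦ f (t, y))
      ((fderiv ℝ f (t, x)).comp (ContinuousLinearMap.inr ℝ ℝ V3)) x :=
    hf.hasFDerivAt.comp x (hasFDerivAt_prodMk_right t x)
  simp [pdx, hslice.fderiv]

theorem hasDerivAt_pdt {t : ℝ} {x : V3} (hf : DifferentiableAt ℝ f (t, x)) :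
    HasDerivAt (fun s ↦ f (s, x)) (pdt f (t, x)) t :=
  hf.hasFDerivAt.comp_hasDerivAt t ((hasDerivAt_id t).prodMk (hasDerivAt_const t x))

theorem div3_eq_sum_fderiv_slice {t : ℝ} {x : V3} (hF : DifferentiableAt ℝ F (t, x)) :
    div3 F (t, x) = ∑ j, fderiv ℝ (fun y ↦ F (t, y) j) x (Pi.single j 1) :=
  Finset.sum_congr rfl fun j _ ↦ pdx_eq_fderiv_slice (differentiableAt_pi.mp hF j) j

theorem contDiff_slice_apply (hF : ContDiff ℝ n F) (t : ℝ) (j : Fin 3) :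
    ContDiff ℝ n fun x ↦ F (t, x) j :=
  (contDiff_pi.mp hF j).comp (contDiff_prodMk_right t)

theorem integrable_div3_slice {t : ℝ} (hF : ContDiff ℝ 1 F)
    (hc : HasCompactSupport fun x ↦ F (t, x)) : Integrable fun x ↦ div3 F (t, x) := by
  simp only [div3_eq_sum_fderiv_slice (hF.differentiable one_ne_zero _)]
  exact integrable_finsetSum _ fun j _ ↦
    integrable_fderiv_apply (contDiff_slice_apply hF t j)
      (hc.comp_left (g := fun u : V3 ↦ u j) rfl) _

theorem integral_div3_slice_eq_zero {t : ℝ} (hF : ContDiff ℝ 1 F)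
    (hc : HasCompactSupport fun x ↦ F (t, x)) : ∫ x, div3 F (t, x) = 0 := by
  have hFj := contDiff_slice_apply hF t
  have hcj (j : Fin 3) : HasCompactSupport fun x ↦ F (t, x) j :=
    hc.comp_left (g := fun u : V3 ↦ u j) rfl
  simp only [div3_eq_sum_fderiv_slice (hF.differentiable one_ne_zero _)]
  rw [integral_finsetSum _ fun j _ ↦ integrable_fderiv_apply (hFj j) (hcj j) _]
  exact Finset.sum_eq_zero fun j _ ↦ integral_fderiv_apply_eq_zero (hFj j) (hcj j) _

end VectorCalculus

/-- The helicity density `K⁰ = 𝓐 ⬝ ℬ`, the integrand of `semiHelicity`. -/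
def helicityDensity (A : ℝ × V3 → V3) (p : ℝ × V3) : ℝ := dot3 (A p) (Bfield A p)

/-- The helicity flux `2c𝒜⁰ℬ + 𝓐 × ∂ₜ𝓐`. It differs from the usual `c(𝒜⁰ℬ + ℰ × 𝓐)` by the
divergence-free field `c∇ × (𝒜⁰𝓐)`; in this form its divergence involves no second derivatives
of `𝒜⁰`. -/
def helicityFlux (c : ℝ) (A0 : ℝ × V3 → ℝ) (A : ℝ × V3 → V3) (p : ℝ × V3) : V3 :=
  (2 * c * A0 p) • Bfield A p + cross3 (A p) (pdt3 A p)

section Helicity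

open Topology

variable {c : ℝ} {A0 : ℝ × V3 → ℝ} {A : ℝ × V3 → V3} {p : ℝ × V3}

theorem contDiffAt_helicityDensity (hA : ContDiffAt ℝ 2 A p) :
    ContDiffAt ℝ 1 (helicityDensity A) p :=
  contDiffAt_dot3 (hA.of_le one_le_two) (contDiffAt_curl3 hA one_add_one_eq_two.le)

theorem contDiffAt_helicityFlux (hA0 : ContDiffAt ℝ 1 A0 p) (hA : ContDiffAt ℝ 2 A p) :
    ContDiffAt ℝ 1 (helicityFlux c A0 A) p :=
  ((contDiffAt_const.mul hA0).smul (contDiffAt_curl3 hA one_add_one_eq_two.le)).add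
    (contDiffAt_cross3 (hA.of_le one_le_two) (contDiffAt_pdt3 hA one_add_one_eq_two.le))

theorem helicityFlux_eq_zero_of_eventuallyEq_zero (hA : A =ᶠ[𝓝 p] 0) :
    helicityFlux c A0 A p = 0 := by
  have hB : Bfield A p = 0 := curl3_eq_zero_of_eventuallyEq_zero hA
  ext i
  simp [helicityFlux, hB, hA.eq_of_nhds, cross3]

theorem dot3_pdt3 (hc : c ≠ 0) (b : V3) :
    dot3 (pdt3 A p) b = -c * dot3 (Efield c A0 A p) b - c * dot3 (grad3 A0 p) b := by
  simp only [dot3, Efield, pdt3, pdt, Fin.sum_univ_three]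
  field_simp
  ring

theorem div3_helicityFlux (hA0 : DifferentiableAt ℝ A0 p) (hA : ContDiffAt ℝ 2 A p) :
    div3 (helicityFlux c A0 A) p = 2 * c * dot3 (grad3 A0 p) (Bfield A p) +
      dot3 (Bfield A p) (pdt3 A p) - dot3 (A p) (curl3 (pdt3 A) p) := by
  have hA' : DifferentiableAt ℝ A p := hA.differentiableAt two_ne_zero
  have hAt : DifferentiableAt ℝ (pdt3 A) p :=
    (contDiffAt_pdt3 hA one_add_one_eq_two.le).differentiableAt one_ne_zero
  have hB : DifferentiableAt ℝ (Bfield A) p :=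
    (contDiffAt_curl3 hA one_add_one_eq_two.le).differentiableAt one_ne_zero
  have hφ : DifferentiableAt ℝ (fun q ↦ 2 * c * A0 q) p := hA0.const_mul _
  have hgrad : grad3 (fun q ↦ 2 * c * A0 q) p = (2 * c) • grad3 A0 p := by
    ext j
    simp [grad3, pdx, fderiv_const_mul hA0]
  have hdivB : div3 (Bfield A) p = 0 := div3_curl3 hA
  have hcross : DifferentiableAt ℝ (fun q ↦ cross3 (A q) (pdt3 A q)) p :=
    (contDiffAt_cross3 (hA.of_le one_le_two)
      (contDiffAt_pdt3 hA one_add_one_eq_two.le)).differentiableAt one_ne_zero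
  calc div3 (helicityFlux c A0 A) p
    _ = div3 (fun q ↦ (2 * c * A0 q) • Bfield A q) p +
          div3 (fun q ↦ cross3 (A q) (pdt3 A q)) p := div3_add (hφ.smul hB) hcross
    _ = dot3 ((2 * c) • grad3 A0 p) (Bfield A p) +
          (dot3 (Bfield A p) (pdt3 A p) - dot3 (A p) (curl3 (pdt3 A) p)) := by
      rw [div3_smul hφ hB, div3_cross3 hA' hAt, hgrad, hdivB, mul_zero, add_zero]
      rfl
    _ = 2 * c * dot3 (grad3 A0 p) (Bfield A p) +
          dot3 (Bfield A p) (pdt3 A p) - dot3 (A p) (curl3 (pdt3 A) p) := by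
      simp only [dot3, Pi.smul_apply, smul_eq_mul, mul_assoc, ← Finset.mul_sum, add_sub_assoc]

theorem pdt_helicityDensity_add_div3_helicityFlux (hc : c ≠ 0) (hA0 : DifferentiableAt ℝ A0 p)
    (hA : ContDiffAt ℝ 2 A p) :
    pdt (helicityDensity A) p + div3 (helicityFlux c A0 A) p =
      -2 * c * dot3 (Efield c A0 A p) (Bfield A p) := by
  have hA' : DifferentiableAt ℝ A p := hA.differentiableAt two_ne_zero
  have hB' : DifferentiableAt ℝ (Bfield A) p :=
    (contDiffAt_curl3 hA one_add_one_eq_two.le).differentiableAt one_ne_zero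
  have hdensity : pdt (helicityDensity A) p =
      dot3 (pdt3 A p) (Bfield A p) + dot3 (A p) (curl3 (pdt3 A) p) :=
    (pdt_dot3 hA' hB').trans congr(_ + dot3 (A p) $(pdt3_curl3 hA))
  rw [hdensity, div3_helicityFlux hA0 hA, dot3_comm (Bfield A p), dot3_pdt3 (A0 := A0) hc]
  ring

theorem hasDerivAt_semiHelicity (hc : c ≠ 0) (hA0 : ContDiff ℝ 1 A0) (hA : ContDiff ℝ 2 A)
    {I : Set ℝ} {K : Set V3} (hI : IsOpen I) (hK : IsCompact K)
    (hsupp : ∀ t ∈ I, ∀ x ∉ K, A (t, x) = 0) {t : ℝ} (ht : t ∈ I) :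
    HasDerivAt (semiHelicity A)
      (-2 * c * ∫ x, dot3 (Efield c A0 A (t, x)) (Bfield A (t, x))) t := by
  have hdensity : ContDiff ℝ 1 (helicityDensity A) :=
    contDiff_iff_contDiffAt.mpr fun _ ↦ contDiffAt_helicityDensity hA.contDiffAt
  have hflux : ContDiff ℝ 1 (helicityFlux c A0 A) :=
    contDiff_iff_contDiffAt.mpr fun _ ↦ contDiffAt_helicityFlux hA0.contDiffAt hA.contDiffAt
  have hpdt : Continuous (pdt (helicityDensity A)) :=
    (hdensity.continuous_fderiv one_ne_zero).clm_apply continuous_const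
  have hflux_supp : HasCompactSupport fun x ↦ helicityFlux c A0 A (t, x) :=
    .intro hK fun {x} hx ↦ helicityFlux_eq_zero_of_eventuallyEq_zero <|
      Filter.mem_of_superset ((hI.prod hK.isClosed.isOpen_compl).mem_nhds ⟨ht, hx⟩)
        fun q hq ↦ hsupp q.1 hq.1 q.2 hq.2
  obtain ⟨hpdt_int, hderiv⟩ := hasDerivAt_integral_of_continuous_of_isCompact (μ := volume)
    (f := fun s x ↦ helicityDensity A (s, x)) (f' := fun s x ↦ pdt (helicityDensity A) (s, x))
    (hI.mem_nhds ht) hK (fun s _ ↦ hdensity.continuous.comp (Continuous.prodMk_right s)) hpdt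
    (fun s _ x ↦ hasDerivAt_pdt (hdensity.differentiable one_ne_zero (s, x)))
    (fun s hs x hx ↦ by simp [helicityDensity, dot3, hsupp s hs x hx])
  have hrate :=
    calc ∫ x, pdt (helicityDensity A) (t, x)
      _ = ∫ x, (pdt (helicityDensity A) (t, x) + div3 (helicityFlux c A0 A) (t, x)) := by
        rw [integral_add hpdt_int (integrable_div3_slice hflux hflux_supp),
          integral_div3_slice_eq_zero hflux hflux_supp, add_zero]
      _ = ∫ x, -2 * c * dot3 (Efield c A0 A (t, x)) (Bfield A (t, x)) :=
        integral_congr_ae (.of_forall fun x ↦ pdt_helicityDensity_add_div3_helicityFlux hc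
          (hA0.differentiable one_ne_zero _) hA.contDiffAt)
      _ = -2 * c * ∫ x, dot3 (Efield c A0 A (t, x)) (Bfield A (t, x)) := integral_const_mul _ _
  exact hrate ▸ hderiv

end Helicity

theorem semi_helicity_conservation_homentropic_general {c : ℝ} (hc : c ≠ 0)
    {A0 : ℝ × V3 → ℝ} {A : ℝ × V3 → V3} (hA0 : ContDiff ℝ 1 A0) (hA : ContDiff ℝ 2 A)
    {I : Set ℝ} {K : Set V3} (hI : IsOpen I) (hI' : IsPreconnected I) (hK : IsCompact K)
    (hsupp : ∀ t ∈ I, ∀ x ∉ K, A (t, x) = 0)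
    (hEB : ∀ t ∈ I, ∀ x, dot3 (Efield c A0 A (t, x)) (Bfield A (t, x)) = 0) :
    ∀ t₁ ∈ I, ∀ t₂ ∈ I, semiHelicity A t₁ = semiHelicity A t₂ := by
  have hderiv : ∀ t ∈ I, HasDerivAt (semiHelicity A) 0 t := fun t ht ↦ by
    simpa [hEB t ht] using hasDerivAt_semiHelicity hc hA0 hA hI hK hsupp ht
  intro t₁ ht₁ t₂ ht₂
  exact hI.is_const_of_deriv_eq_zero hI'
    (fun t ht ↦ (hderiv t ht).differentiableAt.differentiableWithinAt)
    (fun t ht ↦ (hderiv t ht).deriv) ht₁ ht₂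

/-- In a homentropic fluid (dθ = 0, i.e. ℰ + (v/c)×ℬ = 0) the semi-relativistic
    helicity is constant, regardless of the relativistic factor γ. -/
theorem semi_helicity_conservation_homentropic (c : ℝ) (hc : 0 < c)
    (A0 : ℝ × V3 → ℝ) (A : ℝ × V3 → V3) (v : ℝ × V3 → V3)
    (hA0 : ContDiff ℝ 2 A0) (hA : ContDiff ℝ 2 A)
    (a b : ℝ) (𝒦 : Set V3) (h𝒦 : IsCompact 𝒦)
    (hsupp : ∀ t ∈ Set.Ioo a b, ∀ x : V3, x ∉ 𝒦 → A (t, x) = 0)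
    (heqm : ∀ p, ∀ i : Fin 3,
      Efield c A0 A p i + cross3 (v p) (Bfield A p) i / c = 0) :
    ∀ t₁ ∈ Set.Ioo a b, ∀ t₂ ∈ Set.Ioo a b,
      semiHelicity A t₁ = semiHelicity A t₂ := by
  exact semi_helicity_conservation_homentropic_general hc.ne' (hA0.of_le one_le_two) hA isOpen_Ioo
    isPreconnected_Ioo h𝒦 hsupp fun t _ x ↦ dot3_eq_zero_of_add_cross3_div_eq_zero (heqm (t, x))
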